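/- arXiv:1710.01108 — 2 statements merged into one kernel-verified Lean document; each statement's English description precedes it below -/
import Mathlib

section
/- Let x₀ be an interior point of I and let f : I → ℝ be continuous and strictly monotone, right-differentiable at x₀ with f'₊(x₀) ≠ 0. If g : I → ℝ is continuous and strictly monotone and A^[g] is comparable with A^[f] (that is, A^[f] ≤ A^[g] or A^[g] ≤ A^[f]), then g is right-differentiable at x₀ and g'₊(x₀) ≠ 0. (The analogous statement holds for left-sided derivatives.) -/
/-!
Since `A^[-f] = A^[f]`, both generators may be taken increasing. Comparing the means of pairs then
says that `g ∘ f⁻¹` is midpoint convex or midpoint concave on the interval `f '' I`; being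
continuous, it is convex or concave. It therefore has a right derivative at the interior point
`f x₀`, and this derivative is positive because it is bounded below by the slope of a chord of an
increasing function. The chain rule for `g = (g ∘ f⁻¹) ∘ f` concludes.
-/

open Set Function Filter

/-- The quasi-arithmetic mean generated by `f` on the interval `I`,
applied to a vector `a ∈ Iⁿ`: `f⁻¹((f a₁ + ⋯ + f aₙ)/n)`, where the
inverse of `f` is taken on `I`. -/
noncomputable def qam (I : Set ℝ) (f : ℝ → ℝ) {n : ℕ} (a : Fin n → ℝ) : ℝ :=
  Function.invFunOn f I ((∑ i, f (a i)) / n)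

/-- The natural (pointwise) partial order on quasi-arithmetic means:
`A^[f] ≤ A^[g]` iff `A^[f](a) ≤ A^[g](a)` for every `n ≥ 1` and every `a ∈ Iⁿ`. -/
def qamLE (I : Set ℝ) (f g : ℝ → ℝ) : Prop :=
  ∀ n : ℕ, 1 ≤ n → ∀ a : Fin n → ℝ, (∀ i, a i ∈ I) → qam I f a ≤ qam I g a

/-- `A^[f] = A^[g]` : equality of the two quasi-arithmetic means as means. -/
def qamEQ (I : Set ℝ) (f g : ℝ → ℝ) : Prop :=
  ∀ n : ℕ, 1 ≤ n → ∀ a : Fin n → ℝ, (∀ i, a i ∈ I) → qam I f a = qam I g a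

/-- `f` is strictly monotone on `I` (strictly increasing or strictly decreasing). -/
def StrictMonoOrAntiOn (f : ℝ → ℝ) (I : Set ℝ) : Prop :=
  StrictMonoOn f I ∨ StrictAntiOn f I

lemma ordConnected_image_of_continuousOn {α β : Type*} [ConditionallyCompleteLinearOrder α]
    [TopologicalSpace α] [OrderTopology α] [DenselyOrdered α] [LinearOrder β] [TopologicalSpace β]
    [OrderClosedTopology β] {I : Set α} {f : α → β} (hI : I.OrdConnected)
    (hf : ContinuousOn f I) : (f '' I).OrdConnected :=
  (hI.isPreconnected.image f hf).ordConnected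

lemma invFunOn_comp_of_injective {α β γ : Type*} [Nonempty α] {e : β → γ} (he : Injective e)
    (f : α → β) (s : Set α) (y : β) : invFunOn (e ∘ f) s (e y) = invFunOn f s y := by
  unfold invFunOn
  congr! 3 <;> simp only [comp_apply, he.eq_iff]

lemma strictMonoOn_invFunOn_image {α β : Type*} [LinearOrder α] [LinearOrder β] [Nonempty α]
    {f : α → β} {I : Set α} (hf : StrictMonoOn f I) : StrictMonoOn (invFunOn f I) (f '' I) := by
  rintro _ ⟨x, hx, rfl⟩ _ ⟨y, hy, rfl⟩ hxy
  rw [hf.injOn.leftInvOn_invFunOn hx, hf.injOn.leftInvOn_invFunOn hy]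
  exact (hf.lt_iff_lt hx hy).mp hxy

section Interval

variable {α β : Type*} [LinearOrder α] [TopologicalSpace α] [OrderTopology α]
  {I : Set α} {f : α → β} {x₀ : α}

lemma exists_mem_lt_of_mem_interior [DenselyOrdered α] [NoMinOrder α] (hx₀ : x₀ ∈ interior I) :
    ∃ a ∈ I, a < x₀ :=
  have ⟨a, hax, ha⟩ := (eventually_mem_set.mpr (mem_interior_iff_mem_nhds.mp hx₀)).exists_lt
  ⟨a, ha, hax⟩

lemma exists_mem_gt_of_mem_interior [DenselyOrdered α] [NoMaxOrder α] (hx₀ : x₀ ∈ interior I) :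
    ∃ b ∈ I, x₀ < b :=
  exists_mem_lt_of_mem_interior (α := αᵒᵈ) hx₀

variable [LinearOrder β] [TopologicalSpace β]

lemma continuousOn_invFunOn_image [OrderTopology β] [Nonempty α] (hI : I.OrdConnected)
    (hJ : (f '' I).OrdConnected) (hf : StrictMonoOn f I) :
    ContinuousOn (invFunOn f I) (f '' I) := by
  rw [continuousOn_iff_continuous_domRestrict]
  have heq : (f '' I).domRestrict (invFunOn f I) = fun y ↦ ((hf.orderIso f I).symm y : α) := by
    funext y
    obtain ⟨x, rfl⟩ := (hf.orderIso f I).surjective y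
    rw [OrderIso.symm_apply_apply]
    exact hf.injOn.leftInvOn_invFunOn x.2
  rw [heq]
  exact continuous_subtype_val.comp (hf.orderIso f I).symm.continuous

lemma apply_mem_interior_image [OrderClosedTopology β] [DenselyOrdered α] [NoMinOrder α]
    [NoMaxOrder α] (hJ : (f '' I).OrdConnected) (hf : StrictMonoOn f I) (hx₀ : x₀ ∈ interior I) :
    f x₀ ∈ interior (f '' I) := by
  obtain ⟨a, ha, hax⟩ := exists_mem_lt_of_mem_interior hx₀
  obtain ⟨b, hb, hxb⟩ := exists_mem_gt_of_mem_interior hx₀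
  have hx₀I := interior_subset hx₀
  have hnhds : Icc (f a) (f b) ∈ nhds (f x₀) :=
    Icc_mem_nhds (hf ha hx₀I hax) (hf hx₀I hb hxb)
  exact mem_interior_iff_mem_nhds.mpr <| mem_of_superset hnhds <|
    hJ.out (mem_image_of_mem f ha) (mem_image_of_mem f hb)

end Interval

/-- A value exceeding `C` would force a maximum in the interior; midpoint convexity fails at the
leftmost point where it is attained. -/
lemma le_of_midpoint_le {φ : ℝ → ℝ} {x y z C : ℝ} (hφ : ContinuousOn φ (Icc x y))
    (hmid : ∀ s ∈ Icc x y, ∀ t ∈ Icc x y, φ (midpoint ℝ s t) ≤ midpoint ℝ (φ s) (φ t))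
    (hx : φ x ≤ C) (hy : φ y ≤ C) (hz : z ∈ Icc x y) : φ z ≤ C := by
  by_contra! hCz
  obtain ⟨w, hw, hmax⟩ := isCompact_Icc.exists_isMaxOn ⟨z, hz⟩ hφ
  have hCw : C < φ w := hCz.trans_le (hmax hz)
  have hcompact : IsCompact (Icc x y ∩ φ ⁻¹' Ici (φ w)) :=
    isCompact_Icc.of_isClosed_subset (hφ.preimage_isClosed_of_isClosed isClosed_Icc isClosed_Ici)
      inter_subset_left
  obtain ⟨c, ⟨hc, hwc : φ w ≤ φ c⟩, hleast⟩ := hcompact.exists_isLeast ⟨w, hw, le_rfl (a := φ w)⟩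
  have hxc : x < c := hc.1.lt_of_ne (by rintro rfl; linarith)
  have hcy : c < y := hc.2.lt_of_ne (by rintro rfl; linarith)
  obtain ⟨δ, hδ, hδx, hδy⟩ : ∃ δ > 0, δ ≤ c - x ∧ δ ≤ y - c :=
    ⟨min (c - x) (y - c), lt_min (sub_pos.mpr hxc) (sub_pos.mpr hcy), min_le_left _ _,
      min_le_right _ _⟩
  have hl : c - δ ∈ Icc x y := ⟨by linarith, by linarith⟩
  have hr : c + δ ∈ Icc x y := ⟨by linarith, by linarith⟩
  have hφl : φ (c - δ) < φ w := by
    by_contra! h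
    have : c ≤ c - δ := hleast ⟨hl, h⟩
    linarith
  have hφr : φ (c + δ) ≤ φ w := hmax hr
  have hφc := hmid _ hl _ hr
  rw [midpoint_sub_add, midpoint_eq_smul_add, smul_eq_mul, invOf_eq_inv] at hφc
  linarith

lemma convexOn_of_midpoint_le {E : Type*} [AddCommGroup E] [Module ℝ E] [TopologicalSpace E]
    [IsTopologicalAddGroup E] [ContinuousSMul ℝ E] {s : Set E} {h : E → ℝ} (hs : Convex ℝ s)
    (hc : ContinuousOn h s)
    (hmid : ∀ x ∈ s, ∀ y ∈ s, h (midpoint ℝ x y) ≤ midpoint ℝ (h x) (h y)) :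
    ConvexOn ℝ s h := by
  refine ⟨hs, fun x hx y hy a b ha hb hab ↦ ?_⟩
  let chord : ℝ →ᵃ[ℝ] ℝ := AffineMap.lineMap (h x) (h y)
  have hmaps : MapsTo (AffineMap.lineMap x y) (Icc (0 : ℝ) 1) s :=
    fun t ht ↦ hs.lineMap_mem hx hy ht
  have hle : h (AffineMap.lineMap x y b) - chord b ≤ 0 := by
    refine le_of_midpoint_le (φ := fun t ↦ h (AffineMap.lineMap x y t) - chord t) (x := 0) (y := 1)
      ?_ (fun t ht u hu ↦ ?_) (by simp [chord]) (by simp [chord]) ⟨hb, by linarith⟩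
    · exact (hc.comp AffineMap.lineMap_continuous.continuousOn hmaps).sub
        AffineMap.lineMap_continuous.continuousOn
    · have hmid_tu := hmid _ (hmaps ht) _ (hmaps hu)
      rw [AffineMap.map_midpoint, AffineMap.map_midpoint]
      simp only [midpoint_eq_smul_add, smul_eq_mul, invOf_eq_inv] at hmid_tu ⊢
      linarith
  obtain rfl : a = 1 - b := by linarith
  simpa only [chord, AffineMap.lineMap_apply_module, sub_nonpos] using hle

section RightDerivative

variable {S : Set ℝ} {h : ℝ → ℝ} {x : ℝ}

lemma exists_pos_hasDerivWithinAt_Ioi_of_convexOn (hconv : ConvexOn ℝ S h)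
    (hmono : StrictMonoOn h S) (hx : x ∈ interior S) :
    ∃ c > 0, HasDerivWithinAt h c (Ioi x) x := by
  obtain ⟨a, ha, hax⟩ := exists_mem_lt_of_mem_interior hx
  refine ⟨_, ?_, hconv.hasDerivWithinAt_rightDeriv_of_mem_interior hx⟩
  calc
    0 < slope h a x := hmono.slope_pos ha (interior_subset hx) hax.ne
    _ ≤ derivWithin h (Iio x) x := hconv.slope_le_leftDeriv_of_mem_interior ha hx hax
    _ ≤ derivWithin h (Ioi x) x := hconv.leftDeriv_le_rightDeriv_of_mem_interior hx

lemma exists_pos_hasDerivWithinAt_Ioi_of_concaveOn (hconc : ConcaveOn ℝ S h)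
    (hmono : StrictMonoOn h S) (hx : x ∈ interior S) :
    ∃ c > 0, HasDerivWithinAt h c (Ioi x) x := by
  obtain ⟨b, hb, hxb⟩ := exists_mem_gt_of_mem_interior hx
  have hxS := interior_subset hx
  have hderiv : HasDerivWithinAt h (-derivWithin (-h) (Ioi x) x) (Ioi x) x := by
    simpa only [neg_neg] using (hconc.neg.hasDerivWithinAt_rightDeriv_of_mem_interior hx).neg
  exact ⟨_, (hmono.slope_pos hxS hb hxb.ne).trans_le
    (hconc.slope_le_of_hasDerivWithinAt_Ioi hxS hb hxb hderiv), hderiv⟩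

end RightDerivative

lemma hasDerivWithinAt_Ioi_of_comp_invFunOn {I : Set ℝ} {f g : ℝ → ℝ} {x₀ c d : ℝ}
    (hf : StrictMonoOn f I) (hx₀ : x₀ ∈ interior I) (hfd : HasDerivWithinAt f d (Ioi x₀) x₀)
    (hh : HasDerivWithinAt (g ∘ invFunOn f I) c (Ioi (f x₀)) (f x₀)) :
    HasDerivWithinAt g (c * d) (Ioi x₀) x₀ := by
  have hx₀I := interior_subset hx₀
  have hgf : ∀ x ∈ I, g x = (g ∘ invFunOn f I) (f x) := fun x hx ↦ by
    rw [comp_apply, hf.injOn.leftInvOn_invFunOn hx]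
  have hmaps : MapsTo f (Ioi x₀ ∩ I) (Ioi (f x₀)) := fun x hx ↦ hf hx₀I hx.2 hx.1
  rw [← hasDerivWithinAt_inter (mem_interior_iff_mem_nhds.mp hx₀)]
  exact (hh.comp x₀ (hfd.mono inter_subset_left) hmaps).congr
    (fun x hx ↦ hgf x hx.2) (hgf x₀ hx₀I)

section QuasiArithmeticMean

variable {I : Set ℝ} {f g : ℝ → ℝ}

lemma qam_neg (I : Set ℝ) (f : ℝ → ℝ) {n : ℕ} (a : Fin n → ℝ) : qam I (-f) a = qam I f a := by
  have hmean : (∑ i, (-f) (a i)) / n = -((∑ i, f (a i)) / n) := by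
    simp only [Pi.neg_apply, Finset.sum_neg_distrib, neg_div]
  rw [qam, hmean]
  exact invFunOn_comp_of_injective neg_injective f I _

lemma qam_pair (I : Set ℝ) (f : ℝ → ℝ) (x y : ℝ) :
    qam I f ![x, y] = invFunOn f I (midpoint ℝ (f x) (f y)) := by
  simp [qam, Fin.sum_univ_two, midpoint_eq_smul_add, div_eq_inv_mul]

/-- Comparison `A^[f] ≤ A^[g]` of the two-variable quasi-arithmetic means only. -/
def qamPairLE (I : Set ℝ) (f g : ℝ → ℝ) : Prop :=
  ∀ x ∈ I, ∀ y ∈ I, qam I f ![x, y] ≤ qam I g ![x, y]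

lemma qamLE.qamPairLE (h : qamLE I f g) : qamPairLE I f g :=
  fun _ hx _ hy ↦ h 2 one_le_two _ (Fin.forall_fin_two.mpr ⟨hx, hy⟩)

lemma midpoint_mem_image (hI : I.OrdConnected) (hf : ContinuousOn f I) {x y : ℝ} (hx : x ∈ I)
    (hy : y ∈ I) : midpoint ℝ (f x) (f y) ∈ f '' I :=
  (ordConnected_image_of_continuousOn hI hf).convex.midpoint_mem (mem_image_of_mem f hx)
    (mem_image_of_mem f hy)

lemma qam_pair_mem (hI : I.OrdConnected) (hf : ContinuousOn f I) {x y : ℝ} (hx : x ∈ I)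
    (hy : y ∈ I) : qam I f ![x, y] ∈ I := by
  rw [qam_pair]
  exact invFunOn_mem (midpoint_mem_image hI hf hx hy)

lemma apply_qam_pair (hI : I.OrdConnected) (hf : ContinuousOn f I) {x y : ℝ} (hx : x ∈ I)
    (hy : y ∈ I) : f (qam I f ![x, y]) = midpoint ℝ (f x) (f y) := by
  rw [qam_pair]
  exact invFunOn_eq (midpoint_mem_image hI hf hx hy)

lemma convexOn_comp_invFunOn_of_qam_le (hI : I.OrdConnected) (hfc : ContinuousOn f I)
    (hgc : ContinuousOn g I) (hf : StrictMonoOn f I)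
    (hmean : ∀ x ∈ I, ∀ y ∈ I, g (qam I f ![x, y]) ≤ midpoint ℝ (g x) (g y)) :
    ConvexOn ℝ (f '' I) (g ∘ invFunOn f I) := by
  have hJ := ordConnected_image_of_continuousOn hI hfc
  refine convexOn_of_midpoint_le hJ.convex
    (hgc.comp (continuousOn_invFunOn_image hI hJ hf) (surjOn_image f I).mapsTo_invFunOn) ?_
  rintro _ ⟨x, hx, rfl⟩ _ ⟨y, hy, rfl⟩
  have hleft := hf.injOn.leftInvOn_invFunOn
  simpa only [comp_apply, hleft hx, hleft hy, qam_pair] using hmean x hx y hy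

lemma qamPairLE.convexOn_comp_invFunOn (hI : I.OrdConnected) (hfc : ContinuousOn f I)
    (hgc : ContinuousOn g I) (hf : StrictMonoOn f I) (hg : MonotoneOn g I)
    (h : qamPairLE I f g) : ConvexOn ℝ (f '' I) (g ∘ invFunOn f I) := by
  refine convexOn_comp_invFunOn_of_qam_le hI hfc hgc hf fun x hx y hy ↦ ?_
  calc
    g (qam I f ![x, y]) ≤ g (qam I g ![x, y]) :=
      hg (qam_pair_mem hI hfc hx hy) (qam_pair_mem hI hgc hx hy) (h x hx y hy)
    _ = midpoint ℝ (g x) (g y) := apply_qam_pair hI hgc hx hy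

lemma qamPairLE.concaveOn_comp_invFunOn (hI : I.OrdConnected) (hfc : ContinuousOn f I)
    (hgc : ContinuousOn g I) (hf : StrictMonoOn f I) (hg : MonotoneOn g I)
    (h : qamPairLE I g f) : ConcaveOn ℝ (f '' I) (g ∘ invFunOn f I) := by
  refine neg_convexOn_iff.mp <|
    convexOn_comp_invFunOn_of_qam_le hI hfc hgc.neg hf fun x hx y hy ↦ ?_
  calc
    -g (qam I f ![x, y]) ≤ -g (qam I g ![x, y]) :=
      neg_le_neg <| hg (qam_pair_mem hI hgc hx hy) (qam_pair_mem hI hfc hx hy) (h x hx y hy)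
    _ = -midpoint ℝ (g x) (g y) := by rw [apply_qam_pair hI hgc hx hy]
    _ = midpoint ℝ (-g x) (-g y) := by
      rw [midpoint_eq_smul_add, midpoint_eq_smul_add, ← neg_add, smul_neg]

end QuasiArithmeticMean

theorem right_deriv_nonzero_of_comparable_general {I : Set ℝ} (hI : I.OrdConnected) {x₀ : ℝ}
    (hx₀ : x₀ ∈ interior I) {f g : ℝ → ℝ} (hfc : ContinuousOn f I) (hgc : ContinuousOn g I)
    (hfm : StrictMonoOrAntiOn f I) (hgm : StrictMonoOrAntiOn g I) {d : ℝ} (hd : d ≠ 0)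
    (hfd : HasDerivWithinAt f d (Ioi x₀) x₀) (hcomp : qamPairLE I f g ∨ qamPairLE I g f) :
    ∃ d' : ℝ, d' ≠ 0 ∧ HasDerivWithinAt g d' (Ioi x₀) x₀ := by
  wlog hf : StrictMonoOn f I generalizing f d
  · have hfneg : StrictMonoOn (-f) I := (hfm.resolve_left hf).neg
    exact this hfc.neg (.inl hfneg) (neg_ne_zero.mpr hd) hfd.neg
      (by simpa only [qamPairLE, qam_neg] using hcomp) hfneg
  wlog hg : StrictMonoOn g I generalizing g
  · have hgneg : StrictMonoOn (-g) I := (hgm.resolve_left hg).neg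
    obtain ⟨d', hd', hderiv⟩ := this hgc.neg (.inl hgneg)
      (by simpa only [qamPairLE, qam_neg] using hcomp) hgneg
    exact ⟨-d', neg_ne_zero.mpr hd', by simpa only [neg_neg] using hderiv.neg⟩
  have hJ := ordConnected_image_of_continuousOn hI hfc
  have hmono : StrictMonoOn (g ∘ invFunOn f I) (f '' I) :=
    hg.comp (strictMonoOn_invFunOn_image hf) (surjOn_image f I).mapsTo_invFunOn
  have hfx₀ := apply_mem_interior_image hJ hf hx₀
  obtain ⟨c, hc, hderiv⟩ :
      ∃ c > 0, HasDerivWithinAt (g ∘ invFunOn f I) c (Ioi (f x₀)) (f x₀) := by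
    rcases hcomp with h | h
    · exact exists_pos_hasDerivWithinAt_Ioi_of_convexOn
        (h.convexOn_comp_invFunOn hI hfc hgc hf hg.monotoneOn) hmono hfx₀
    · exact exists_pos_hasDerivWithinAt_Ioi_of_concaveOn
        (h.concaveOn_comp_invFunOn hI hfc hgc hf hg.monotoneOn) hmono hfx₀
  exact ⟨c * d, mul_ne_zero hc.ne' hd, hasDerivWithinAt_Ioi_of_comp_invFunOn hf hx₀ hfd hderiv⟩

/-- Theorem 2: if `f` is right-differentiable at an interior point `x₀`
with `f'₊(x₀) ≠ 0`, and `A^[g]` is comparable with `A^[f]`, then `g` is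
right-differentiable at `x₀` with `g'₊(x₀) ≠ 0`. -/
theorem right_deriv_nonzero_of_comparable
    (I : Set ℝ) (hI : I.OrdConnected) (hInontriv : ∃ x ∈ I, ∃ y ∈ I, x < y)
    (x₀ : ℝ) (hx₀ : x₀ ∈ interior I)
    (f g : ℝ → ℝ)
    (hfc : ContinuousOn f I) (hgc : ContinuousOn g I)
    (hfm : StrictMonoOrAntiOn f I) (hgm : StrictMonoOrAntiOn g I)
    (d : ℝ) (hd : d ≠ 0) (hfd : HasDerivWithinAt f d (Ioi x₀) x₀)
    (hcomp : qamLE I f g ∨ qamLE I g f) :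
    ∃ d' : ℝ, d' ≠ 0 ∧ HasDerivWithinAt g d' (Ioi x₀) x₀ := by
  exact right_deriv_nonzero_of_comparable_general hI hx₀ hfc hgc hfm hgm hd hfd
    (hcomp.imp qamLE.qamPairLE qamLE.qamPairLE)
end

section
/- Let I ⊆ ℝ be an open nontrivial interval and let f, g, h : I → ℝ be continuous and strictly monotone. Suppose f and g are continuously differentiable on I with f'(x) ≠ 0 and g'(x) ≠ 0 for all x ∈ I, and that A^[f] ≤ A^[h] ≤ A^[g]. Then h is continuously differentiable on I and h'(x) ≠ 0 for all x ∈ I. -/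
/-!
Replacing a generator by a nonzero multiple does not change its mean, so all three may be taken
increasing. For increasing `u, v`, the inequality `A^[u] ≤ A^[v]` says that `v` is convex relative
to `u`, that is, `v ∘ u⁻¹` is convex; hence at every point `x` some `c > 0` satisfies
`c * (u y - u x) ≤ v y - v x` for all `y`. Applied to `(f, h)` and to `(h, g)` this squeezes `h`
between a multiple of `f` and a multiple of `g`, up to constants, with contact at `x`, so `h` is
differentiable at `x` with `h' x = c x * f' x > 0`. Being both the relative derivative of `h` and
a bound for its relative slopes on either side, `c` is continuous, and so is `h'`.
-/

open Set Function Filter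

open Topology Asymptotics

section Calculus

lemma nonpos_of_forall_exists_le_average {α : Type*} [ConditionallyCompleteLinearOrder α]
    [TopologicalSpace α] [OrderTopology α] {a b : α} {k : α → ℝ} (hk : ContinuousOn k (Icc a b))
    (ha : k a ≤ 0) (hb : k b ≤ 0)
    (hmean : ∀ y ∈ Ioo a b, ∃ s ∈ Ico a y, ∃ t ∈ Ioc y b, k y ≤ (k s + k t) / 2)
    {y : α} (hy : y ∈ Icc a b) : k y ≤ 0 := by
  -- At the leftmost maximizer `c`, an average involving a point `s < c` is below the maximum.
  obtain ⟨m, hm, hmax⟩ := isCompact_Icc.exists_isMaxOn ⟨y, hy⟩ hk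
  have hcompact : IsCompact (Icc a b ∩ k ⁻¹' {k m}) :=
    isCompact_Icc.of_isClosed_subset
      (hk.preimage_isClosed_of_isClosed isClosed_Icc isClosed_singleton) inter_subset_left
  obtain ⟨c, ⟨hc, hcm : k c = k m⟩, hleast⟩ := hcompact.exists_isLeast ⟨m, hm, rfl⟩
  suffices k c ≤ 0 from (hmax hy).trans (hcm.symm.trans_le this)
  by_contra! hpos
  have hac : a < c := hc.1.lt_of_ne (by rintro rfl; exact hpos.not_ge ha)
  have hcb : c < b := hc.2.lt_of_ne (by rintro rfl; exact hpos.not_ge hb)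
  obtain ⟨s, hs, t, ht, hst⟩ := hmean c ⟨hac, hcb⟩
  have hs' : s ∈ Icc a b := ⟨hs.1, hs.2.le.trans hc.2⟩
  have hsm : k s < k m := (hmax hs').lt_of_ne fun h => hs.2.not_ge (hleast ⟨hs', h⟩)
  have htm : k t ≤ k m := hmax ⟨hc.1.trans ht.1.le, ht.2⟩
  linarith

lemma exists_eq_average {α : Type*} [ConditionallyCompleteLinearOrder α] [TopologicalSpace α]
    [OrderTopology α] [DenselyOrdered α] {a y b : α} {u : α → ℝ} (hu : ContinuousOn u (Icc a b))
    (hy : y ∈ Icc a b) (hay : u a < u y) (hyb : u y < u b) :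
    ∃ s ∈ Ico a y, ∃ t ∈ Ioc y b, u y = (u s + u t) / 2 := by
  set δ := min (u y - u a) (u b - u y)
  have hδ0 : 0 < δ := lt_min (sub_pos.2 hay) (sub_pos.2 hyb)
  have hδa : δ ≤ u y - u a := min_le_left _ _
  have hδb : δ ≤ u b - u y := min_le_right _ _
  obtain ⟨s, hs, hus⟩ := intermediate_value_Icc hy.1 (hu.mono (Icc_subset_Icc_right hy.2))
    (show u y - δ ∈ Icc (u a) (u y) from ⟨by linarith, by linarith⟩)
  obtain ⟨t, ht, hut⟩ := intermediate_value_Icc hy.2 (hu.mono (Icc_subset_Icc_left hy.1))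
    (show u y + δ ∈ Icc (u y) (u b) from ⟨by linarith, by linarith⟩)
  refine ⟨s, ⟨hs.1, hs.2.lt_of_ne ?_⟩, t, ⟨ht.1.lt_of_ne ?_, ht.2⟩, by linarith⟩
  · rintro rfl; linarith
  · rintro rfl; linarith

lemma hasFDerivAt_of_le_of_le {E : Type*} [NormedAddCommGroup E] [NormedSpace ℝ E]
    {a b k : E → ℝ} {a' b' : E →L[ℝ] ℝ} {x : E} (ha : HasFDerivAt a a' x)
    (hb : HasFDerivAt b b' x) (hak : a ≤ᶠ[𝓝 x] k) (hkb : k ≤ᶠ[𝓝 x] b) (hax : a x = k x)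
    (hbx : b x = k x) : HasFDerivAt k a' x := by
  have hmin : IsLocalMin (b - a) x := by
    filter_upwards [hak, hkb] with y hay hyb
    simpa only [Pi.sub_apply, hax, hbx, sub_self, sub_nonneg] using hay.trans hyb
  obtain rfl : b' = a' := sub_eq_zero.1 (hmin.hasFDerivAt_eq_zero (hb.sub ha))
  rw [hasFDerivAt_iff_isLittleO] at ha hb ⊢
  refine (IsBigO.of_norm_eventuallyLE ?_).trans_isLittleO (ha.norm_left.add hb.norm_left)
  filter_upwards [hak, hkb] with y hay hyb
  simp only [hax, hbx, Real.norm_eq_abs]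
  calc |k y - k x - b' (y - x)|
      ≤ max |a y - k x - b' (y - x)| |b y - k x - b' (y - x)| :=
        abs_le_max_abs_abs (by gcongr) (by gcongr)
    _ ≤ |a y - k x - b' (y - x)| + |b y - k x - b' (y - x)| :=
        max_le_add_of_nonneg (abs_nonneg _) (abs_nonneg _)

lemma pos_of_hasDerivAt_of_monotoneOn {I : Set ℝ} {u : ℝ → ℝ} {u' x : ℝ} (hI : I ∈ 𝓝 x)
    (hum : MonotoneOn u I) (hu : HasDerivAt u u' x) (hu' : u' ≠ 0) : 0 < u' := by
  refine lt_of_le_of_ne ?_ hu'.symm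
  rw [← hu.deriv, ← derivWithin_of_mem_nhds hI]
  exact hum.derivWithin_nonneg

lemma tendsto_sub_div_sub_of_hasDerivAt {𝕜 : Type*} [NontriviallyNormedField 𝕜] {u v : 𝕜 → 𝕜}
    {u' v' x : 𝕜} (hu : HasDerivAt u u' x) (hu' : u' ≠ 0) (hv : HasDerivAt v v' x) :
    Tendsto (fun y => (v y - v x) / (u y - u x)) (𝓝[≠] x) (𝓝 (v' / u')) := by
  refine ((hasDerivAt_iff_tendsto_slope.1 hv).div (hasDerivAt_iff_tendsto_slope.1 hu) hu').congr' ?_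
  filter_upwards [self_mem_nhdsWithin] with y hy
  simp only [Pi.div_apply, slope_def_field]
  rw [div_div_div_cancel_right₀ (sub_ne_zero.2 hy)]

end Calculus

section RelativeConvexity

/-- `v` is convex relative to `u` on `I`: the slopes of `v` measured against `u` increase. For
strictly increasing continuous `u` this is convexity of `v ∘ u⁻¹`, stated without the inverse. -/
def RelConvexOn (I : Set ℝ) (u v : ℝ → ℝ) : Prop :=
  ∀ ⦃x⦄, x ∈ I → ∀ ⦃y⦄, y ∈ I → ∀ ⦃z⦄, z ∈ I → x < y → y < z →
    (v y - v x) / (u y - u x) ≤ (v z - v y) / (u z - u y)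

/-- `c` is a subgradient of `v` at `x` relative to `u` on `I`: when `v = φ ∘ u`, the line of slope
`c` supports `φ` from below at `u x`. -/
def IsRelSubgradientAt (I : Set ℝ) (u v : ℝ → ℝ) (c x : ℝ) : Prop :=
  ∀ y ∈ I, c * (u y - u x) ≤ v y - v x

variable {I : Set ℝ} {u v : ℝ → ℝ}

lemma relConvexOn_of_forall_le_average (hI : I.OrdConnected) (hum : StrictMonoOn u I)
    (huc : ContinuousOn u I) (hvc : ContinuousOn v I)
    (hmid : ∀ s ∈ I, ∀ t ∈ I, ∀ y ∈ I, u y = (u s + u t) / 2 → v y ≤ (v s + v t) / 2) :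
    RelConvexOn I u v := by
  intro x hx y hy z hz hxy hyz
  have hsub : Icc x z ⊆ I := hI.out hx hz
  have huxz : u x < u z := hum hx hz (hxy.trans hyz)
  -- `k` is a positive multiple of `v` minus its interpolation by `u` at `x` and `z`.
  let k w := (v w - v x) * (u z - u x) - (v z - v x) * (u w - u x)
  have hk : ContinuousOn k (Icc x z) :=
    (((hvc.mono hsub).sub continuousOn_const).mul continuousOn_const).sub
      (continuousOn_const.mul ((huc.mono hsub).sub continuousOn_const))
  have hmean : ∀ w ∈ Ioo x z, ∃ s ∈ Ico x w, ∃ t ∈ Ioc w z, k w ≤ (k s + k t) / 2 := by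
    intro w hw
    have hwI := hsub (Ioo_subset_Icc_self hw)
    obtain ⟨s, hs, t, ht, hst⟩ := exists_eq_average (huc.mono hsub) (Ioo_subset_Icc_self hw)
      (hum hx hwI hw.1) (hum hwI hz hw.2)
    have hv : v w ≤ (v s + v t) / 2 := hmid s (hsub ⟨hs.1, hs.2.le.trans hw.2.le⟩)
      t (hsub ⟨hw.1.le.trans ht.1.le, ht.2⟩) w hwI hst
    refine ⟨s, hs, t, ht, ?_⟩
    simp only [k, hst]
    linarith [mul_le_mul_of_nonneg_right hv (sub_pos.2 huxz).le]
  have hky : k y ≤ 0 := nonpos_of_forall_exists_le_average hk (by simp [k])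
    (by simp [k, mul_comm]) hmean ⟨hxy.le, hyz.le⟩
  rw [div_le_div_iff₀ (sub_pos.2 (hum hx hy hxy)) (sub_pos.2 (hum hy hz hyz))]
  simp only [k] at hky
  linarith

lemma RelConvexOn.exists_isRelSubgradientAt (huv : RelConvexOn I u v) (hum : StrictMonoOn u I)
    {x : ℝ} (hx : I ∈ 𝓝 x) : ∃ c, IsRelSubgradientAt I u v c x := by
  have hxI : x ∈ I := mem_of_mem_nhds hx
  obtain ⟨l, hlx, hl⟩ := (eventually_mem_set.2 hx).exists_lt
  obtain ⟨r, hxr, hr⟩ := (eventually_mem_set.2 hx).exists_gt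
  obtain ⟨c, hleft, hright⟩ := exists_between_of_forall_le
    (s := (fun y => (v x - v y) / (u x - u y)) '' (I ∩ Iio x))
    (t := (fun y => (v y - v x) / (u y - u x)) '' (I ∩ Ioi x))
    ⟨_, mem_image_of_mem _ ⟨hl, hlx⟩⟩ ⟨_, mem_image_of_mem _ ⟨hr, hxr⟩⟩ <| by
      rintro _ ⟨y, ⟨hy, hyx⟩, rfl⟩ _ ⟨z, ⟨hz, hxz⟩, rfl⟩
      exact huv hy hxI hz hyx hxz
  refine ⟨c, fun y hy => ?_⟩
  rcases lt_trichotomy y x with hyx | rfl | hxy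
  · have := hleft (mem_image_of_mem _ ⟨hy, hyx⟩)
    rw [div_le_iff₀ (sub_pos.2 (hum hy hxI hyx))] at this
    linarith
  · simp
  · have := hright (mem_image_of_mem _ ⟨hy, hxy⟩)
    rwa [le_div_iff₀ (sub_pos.2 (hum hxI hy hxy))] at this

namespace IsRelSubgradientAt

variable {c x y : ℝ}

lemma pos (hc : IsRelSubgradientAt I u v c x) (hum : MonotoneOn u I) (hvm : StrictMonoOn v I)
    (hx : I ∈ 𝓝 x) : 0 < c := by
  have hxI : x ∈ I := mem_of_mem_nhds hx
  obtain ⟨y, hyx, hy⟩ := (eventually_mem_set.2 hx).exists_lt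
  have hneg : c * (u y - u x) < 0 := (hc y hy).trans_lt (sub_neg.2 (hvm hy hxI hyx))
  exact pos_of_mul_neg_left hneg (sub_nonpos.2 (hum hy hxI hyx.le))

lemma hasDerivAt {f g h : ℝ → ℝ} {d f' g' : ℝ} (hc : IsRelSubgradientAt I f h c x)
    (hd : IsRelSubgradientAt I h g d x) (hd0 : 0 < d) (hx : I ∈ 𝓝 x)
    (hf : HasDerivAt f f' x) (hg : HasDerivAt g g' x) : HasDerivAt h (c * f') x := by
  have hlower : HasDerivAt (fun y => c * (f y - f x) + h x) (c * f') x :=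
    ((hf.sub_const _).const_mul c).add_const _
  have hupper : HasDerivAt (fun y => (g y - g x) / d + h x) (g' / d) x :=
    ((hg.sub_const _).div_const d).add_const _
  refine hasFDerivAt_of_le_of_le hlower hupper ?_ ?_ (by simp) (by simp)
  · filter_upwards [hx] with y hy using le_sub_iff_add_le.1 (hc y hy)
  · filter_upwards [hx] with y hy
    rw [← sub_le_iff_le_add, le_div_iff₀' hd0]
    exact hd y hy

lemma le_slope_div_slope (hc : IsRelSubgradientAt I u v c x) (hy : y ∈ I) (hxy : u x < u y) :
    c ≤ (v y - v x) / (u y - u x) :=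
  (le_div_iff₀ (sub_pos.2 hxy)).2 (hc y hy)

lemma slope_div_slope_le (hc : IsRelSubgradientAt I u v c x) (hy : y ∈ I) (hyx : u y < u x) :
    (v y - v x) / (u y - u x) ≤ c :=
  (div_le_iff_of_neg (sub_neg.2 hyx)).2 (hc y hy)

end IsRelSubgradientAt

lemma continuousOn_of_isRelSubgradientAt {u' c : ℝ → ℝ} (hI : IsOpen I) (hum : StrictMonoOn u I)
    (hud : ∀ x ∈ I, HasDerivAt u (u' x) x) (hu' : ∀ x ∈ I, u' x ≠ 0)
    (hvd : ∀ x ∈ I, HasDerivAt v (c x * u' x) x)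
    (hc : ∀ x ∈ I, IsRelSubgradientAt I u v (c x) x) : ContinuousOn c I := by
  intro x hx
  have hslope := tendsto_sub_div_sub_of_hasDerivAt (hud x hx) (hu' x hx) (hvd x hx)
  rw [mul_div_cancel_right₀ _ (hu' x hx)] at hslope
  have hcontAt : ∀ y ∈ I, y ≠ x →
      Tendsto (fun w => (v y - v w) / (u y - u w)) (𝓝 x) (𝓝 ((v y - v x) / (u y - u x))) :=
    fun y hy hyx =>
      ((hvd x hx).continuousAt.const_sub _).div ((hud x hx).continuousAt.const_sub _)
        (sub_ne_zero.2 (hum.injOn.ne hy hx hyx))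
  -- The relative slope from `y` to `x` is near `c x`, that from `y` to `w` bounds `c w`.
  refine ContinuousAt.continuousWithinAt (tendsto_order.2 ⟨fun b hb => ?_, fun b hb => ?_⟩)
  · obtain ⟨y, hby, hyx, hy⟩ := ((hslope.mono_left (nhdsLT_le_nhdsNE x)).eventually_const_lt hb
      |>.and (eventually_mem_nhdsWithin.and (mem_nhdsWithin_of_mem_nhds (hI.mem_nhds hx)))).exists
    filter_upwards [(hcontAt y hy hyx.ne).eventually_const_lt hby, Ioi_mem_nhds hyx,
      hI.mem_nhds hx] with w hbw hyw hw
    exact hbw.trans_le ((hc w hw).slope_div_slope_le hy (hum hy hw hyw))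
  · obtain ⟨y, hyb, hxy, hy⟩ := ((hslope.mono_left (nhdsGT_le_nhdsNE x)).eventually_lt_const hb
      |>.and (eventually_mem_nhdsWithin.and (mem_nhdsWithin_of_mem_nhds (hI.mem_nhds hx)))).exists
    filter_upwards [(hcontAt y hy hxy.ne').eventually_lt_const hyb, Iio_mem_nhds hxy,
      hI.mem_nhds hx] with w hwb hwy hw
    exact ((hc w hw).le_slope_div_slope hy (hum hw hy hwy)).trans_lt hwb

end RelativeConvexity

section QuasiArithmeticMean

variable {I : Set ℝ} {u v : ℝ → ℝ}

lemma invFunOn_comp_apply {α β γ : Type*} [Nonempty α] {e : β → γ} (he : Injective e) (f : α → β)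
    (S : Set α) (b : β) : invFunOn (e ∘ f) S (e b) = invFunOn f S b := by
  unfold invFunOn
  congr! 4 <;> simp only [comp_apply, he.eq_iff]

lemma qam_const_smul {s : ℝ} (hs : s ≠ 0) {n : ℕ} (a : Fin n → ℝ) :
    qam I (s • u) a = qam I u a := by
  have hmean : (∑ i, (s • u) (a i)) / n = s * ((∑ i, u (a i)) / n) := by
    simp only [Pi.smul_apply, smul_eq_mul, ← Finset.mul_sum, mul_div_assoc]
  rw [qam, hmean]
  exact invFunOn_comp_apply (mul_right_injective₀ hs) u I _

lemma qamLE_const_smul_iff {s t : ℝ} (hs : s ≠ 0) (ht : t ≠ 0) :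
    qamLE I (s • u) (t • v) ↔ qamLE I u v := by
  simp only [qamLE, qam_const_smul hs, qam_const_smul ht]

lemma StrictMonoOrAntiOn.exists_strictMonoOn_const_smul (hu : StrictMonoOrAntiOn u I) :
    ∃ s : ℝ, s ≠ 0 ∧ StrictMonoOn (s • u) I := by
  rcases hu with hu | hu
  · exact ⟨1, one_ne_zero, by simpa only [one_smul] using hu⟩
  · exact ⟨-1, neg_ne_zero.2 one_ne_zero, by rw [neg_smul, one_smul]; exact hu.neg⟩

lemma qam_mem_and_apply_qam (hI : I.OrdConnected) (hu : ContinuousOn u I) {n : ℕ} (hn : 1 ≤ n)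
    {a : Fin n → ℝ} (ha : ∀ i, a i ∈ I) :
    qam I u a ∈ I ∧ u (qam I u a) = (∑ i, u (a i)) / n := by
  have hconv : Convex ℝ (u '' I) := (hI.isPreconnected.image u hu).ordConnected.convex
  refine invFunOn_pos (?_ : (∑ i, u (a i)) / n ∈ u '' I)
  have hn0 : (n : ℝ) ≠ 0 := by positivity
  rw [Finset.sum_div]
  simp only [div_eq_inv_mul]
  exact hconv.sum_mem (fun _ _ => by positivity) (by simp [hn0])
    fun i _ => mem_image_of_mem u (ha i)

namespace qamLE

lemma apply_le_average (hle : qamLE I u v) (hI : I.OrdConnected) (huinj : InjOn u I)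
    (hvm : MonotoneOn v I) (hvc : ContinuousOn v I) {n : ℕ} (hn : 1 ≤ n) {a : Fin n → ℝ}
    (ha : ∀ i, a i ∈ I) {y : ℝ} (hy : y ∈ I) (huy : u y = (∑ i, u (a i)) / n) :
    v y ≤ (∑ i, v (a i)) / n := by
  obtain ⟨hmem, happly⟩ := qam_mem_and_apply_qam hI hvc hn ha
  have hqam : qam I u a = y := by rw [qam, ← huy, huinj.leftInvOn_invFunOn hy]
  rw [← happly]
  exact hvm hy hmem (hqam ▸ hle n hn a ha)

lemma relConvexOn (hle : qamLE I u v) (hI : I.OrdConnected) (hum : StrictMonoOn u I)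
    (hvm : MonotoneOn v I) (huc : ContinuousOn u I) (hvc : ContinuousOn v I) :
    RelConvexOn I u v := by
  refine relConvexOn_of_forall_le_average hI hum huc hvc fun s hs t ht y hy huy => ?_
  have hst : ∀ i, ![s, t] i ∈ I := Fin.forall_fin_two.2 ⟨hs, ht⟩
  simpa [Fin.sum_univ_two] using hle.apply_le_average hI hum.injOn hvm hvc one_le_two
    hst hy (by simpa [Fin.sum_univ_two] using huy)

end qamLE

lemma exists_pos_hasDerivAt_of_qamLE_of_strictMonoOn {f g h f' : ℝ → ℝ} (hI : I.OrdConnected)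
    (hIo : IsOpen I) (hfm : StrictMonoOn f I) (hgm : StrictMonoOn g I) (hhm : StrictMonoOn h I)
    (hhc : ContinuousOn h I) (hfd : ∀ x ∈ I, HasDerivAt f (f' x) x) (hf'c : ContinuousOn f' I)
    (hf'0 : ∀ x ∈ I, f' x ≠ 0) (hgd : DifferentiableOn ℝ g I)
    (hfh : qamLE I f h) (hhg : qamLE I h g) :
    ∃ h' : ℝ → ℝ, (∀ x ∈ I, HasDerivAt h (h' x) x) ∧ ContinuousOn h' I ∧ ∀ x ∈ I, 0 < h' x := by
  have hfc : ContinuousOn f I := HasDerivAt.continuousOn hfd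
  have hnhds : ∀ x ∈ I, I ∈ 𝓝 x := fun x => hIo.mem_nhds
  have hfh' : ∀ x ∈ I, ∃ c, IsRelSubgradientAt I f h c x := fun x hx =>
    (hfh.relConvexOn hI hfm hhm.monotoneOn hfc hhc).exists_isRelSubgradientAt hfm (hnhds x hx)
  choose! c hc using hfh'
  have hhd : ∀ x ∈ I, HasDerivAt h (c x * f' x) x := fun x hx => by
    obtain ⟨d, hd⟩ := (hhg.relConvexOn hI hhm hgm.monotoneOn hhc
      hgd.continuousOn).exists_isRelSubgradientAt hhm (hnhds x hx)
    exact (hc x hx).hasDerivAt hd (hd.pos hhm.monotoneOn hgm (hnhds x hx)) (hnhds x hx)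
      (hfd x hx) (hgd.differentiableAt (hnhds x hx)).hasDerivAt
  refine ⟨fun x => c x * f' x, hhd,
    (continuousOn_of_isRelSubgradientAt hIo hfm hfd hf'0 hhd hc).mul hf'c, fun x hx => ?_⟩
  exact mul_pos ((hc x hx).pos hfm.monotoneOn hhm (hnhds x hx))
    (pos_of_hasDerivAt_of_monotoneOn (hnhds x hx) hfm.monotoneOn (hfd x hx) (hf'0 x hx))

end QuasiArithmeticMean

theorem C1_nonvanishing_interval_type_general {I : Set ℝ} (hI : I.OrdConnected) (hIo : IsOpen I)
    {f g h f' : ℝ → ℝ} (hfm : StrictMonoOrAntiOn f I) (hgm : StrictMonoOrAntiOn g I)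
    (hhm : StrictMonoOrAntiOn h I) (hhc : ContinuousOn h I)
    (hfd : ∀ x ∈ I, HasDerivAt f (f' x) x) (hf'c : ContinuousOn f' I) (hf'0 : ∀ x ∈ I, f' x ≠ 0)
    (hgd : DifferentiableOn ℝ g I) (hfh : qamLE I f h) (hhg : qamLE I h g) :
    ∃ h' : ℝ → ℝ, (∀ x ∈ I, HasDerivAt h (h' x) x) ∧ ContinuousOn h' I ∧
      ∀ x ∈ I, h' x ≠ 0 := by
  obtain ⟨r, hr, hrf⟩ := hfm.exists_strictMonoOn_const_smul
  obtain ⟨s, hs, hsg⟩ := hgm.exists_strictMonoOn_const_smul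
  obtain ⟨t, ht, hth⟩ := hhm.exists_strictMonoOn_const_smul
  obtain ⟨k, hk, hkc, hk0⟩ := exists_pos_hasDerivAt_of_qamLE_of_strictMonoOn hI hIo hrf hsg hth
    (hhc.const_smul t) (fun x hx => (hfd x hx).const_smul r) (hf'c.const_smul r)
    (fun x hx => smul_ne_zero hr (hf'0 x hx)) (hgd.const_smul s)
    ((qamLE_const_smul_iff hr ht).2 hfh) ((qamLE_const_smul_iff ht hs).2 hhg)
  refine ⟨t⁻¹ • k, fun x hx => ?_, hkc.const_smul t⁻¹,
    fun x hx => smul_ne_zero (inv_ne_zero ht) (hk0 x hx).ne'⟩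
  have := (hk x hx).const_smul t⁻¹
  rwa [inv_smul_smul₀ ht] at this

/-- Proposition 1: on an open interval `I`, if `f, g` are `C¹` with
nowhere vanishing derivatives and `A^[f] ≤ A^[h] ≤ A^[g]`, then `h` is `C¹` on `I`
with nowhere vanishing derivative. -/
theorem C1_nonvanishing_interval_type
    (I : Set ℝ) (hI : I.OrdConnected) (hIo : IsOpen I)
    (hInontriv : ∃ x ∈ I, ∃ y ∈ I, x < y)
    (f g h f' g' : ℝ → ℝ)
    (hfc : ContinuousOn f I) (hgc : ContinuousOn g I) (hhc : ContinuousOn h I)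
    (hfm : StrictMonoOrAntiOn f I) (hgm : StrictMonoOrAntiOn g I)
    (hhm : StrictMonoOrAntiOn h I)
    (hfd : ∀ x ∈ I, HasDerivAt f (f' x) x) (hf'c : ContinuousOn f' I)
    (hf'0 : ∀ x ∈ I, f' x ≠ 0)
    (hgd : ∀ x ∈ I, HasDerivAt g (g' x) x) (hg'c : ContinuousOn g' I)
    (hg'0 : ∀ x ∈ I, g' x ≠ 0)
    (hle₁ : qamLE I f h) (hle₂ : qamLE I h g) :
    ∃ h' : ℝ → ℝ, (∀ x ∈ I, HasDerivAt h (h' x) x) ∧ ContinuousOn h' I ∧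
      ∀ x ∈ I, h' x ≠ 0 := by
  exact C1_nonvanishing_interval_type_general hI hIo hfm hgm hhm hhc hfd hf'c hf'0
    (fun x hx => (hgd x hx).differentiableAt.differentiableWithinAt) hle₁ hle₂
end
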